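/- arXiv:2405.13371 — 2 statements merged into one kernel-verified Lean document; each statement's English description precedes it below -/
import Mathlib

section
/- For every finite simple graph G = (V, E) with maximum degree Δ ≥ 1, there exists a probability distribution (PMF) over matchings of G such that for every vertex v with deg(v) = Δ, the probability that v is not covered by the random matching drawn from this distribution is at most 1/Δ. -/
/-- A matching of a simple graph, as a finite set of edges of `G` that are
pairwise vertex-disjoint. -/
def IsMatchingSet {V : Type*} (G : SimpleGraph V) (M : Finset (Sym2 V)) : Prop :=
  (↑M ⊆ G.edgeSet) ∧
    ∀ e ∈ M, ∀ f ∈ M, e ≠ f → ∀ v : V, ¬(v ∈ e ∧ v ∈ f)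

/-!
A colour class of a proper edge colouring is a matching. By Vizing's theorem `G` has a proper edge
colouring with `Δ + 1` colours; at a vertex `v` exactly `Δ + 1 - deg v` of them are absent, so a
uniformly random colour class leaves `v` uncovered with probability `(Δ + 1 - deg v) / (Δ + 1)`,
which is `1 / (Δ + 1)` when `deg v = Δ`.

For Vizing's theorem, following Ehrenfeucht, Faber and Kierstead, add the vertices one at a time. To
add `v`, reserve two colours free at each of its neighbours, except one colour at one of them. As
the number of reservations is odd and less than twice the number of colours, a colour reserved
nowhere and a colour reserved at least three times exist unless some colour is reserved exactly
once. A Kempe swap of the former two reduces the number of unreserved colours, so one reaches a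
colour reserved exactly once; it is given to the edge joining `v` to the vertex reserving it, and
the argument is repeated with one colour and one neighbour less.
-/

open Finset

section EdgeColoring

variable {V α : Type*}

/-! ### Proper edge colourings -/

/-- `c` is a proper edge colouring of `G` with colours in `K`. The colouring is a function on all
unordered pairs, so that it can be used for subgraphs of `G` as well; its values outside the edges
of `G` are irrelevant. -/
structure IsProperEdgeColoring (G : SimpleGraph V) (K : Finset α) (c : Sym2 V → α) : Prop where
  mem : ∀ ⦃x y⦄, G.Adj x y → c s(x, y) ∈ K
  injOn : ∀ x, Set.InjOn (fun y ↦ c s(x, y)) (G.neighborSet x)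

open Classical in
/-- The colours of `K` that `c` gives to no edge of `G` at `u`. -/
noncomputable def freeColors (G : SimpleGraph V) (K : Finset α) (c : Sym2 V → α) (u : V) :
    Finset α :=
  {a ∈ K | ∀ y, G.Adj u y → c s(u, y) ≠ a}

lemma mem_freeColors {G : SimpleGraph V} {K : Finset α} {c : Sym2 V → α} {u : V} {a : α} :
    a ∈ freeColors G K c u ↔ a ∈ K ∧ ∀ y, G.Adj u y → c s(u, y) ≠ a := by
  simp [freeColors]

lemma freeColors_subset (G : SimpleGraph V) (K : Finset α) (c : Sym2 V → α) (u : V) :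
    freeColors G K c u ⊆ K :=
  fun _ ha ↦ (mem_freeColors.1 ha).1

namespace IsProperEdgeColoring

variable {G : SimpleGraph V} {K : Finset α} {c : Sym2 V → α}

lemma eq_of_color_eq (hc : IsProperEdgeColoring G K c) {x y z : V} (hy : G.Adj x y)
    (hz : G.Adj x z) (h : c s(x, y) = c s(x, z)) : y = z :=
  hc.injOn x hy hz h

lemma card_freeColors_add_degree (hc : IsProperEdgeColoring G K c) (u : V)
    [Fintype (G.neighborSet u)] : #(freeColors G K c u) + G.degree u = #K := by
  classical
  have hfree : freeColors G K c u = K \ (G.neighborFinset u).image (fun y ↦ c s(u, y)) := by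
    ext a
    simp [mem_freeColors]
  have hused : (G.neighborFinset u).image (fun y ↦ c s(u, y)) ⊆ K := by
    simpa [image_subset_iff] using fun y hy ↦ hc.mem hy
  have hinj : Set.InjOn (fun y ↦ c s(u, y)) (G.neighborFinset u) := by
    simpa using hc.injOn u
  rw [hfree, ← G.card_neighborFinset_eq_degree, ← card_image_of_injOn hinj,
    card_sdiff_add_card_eq_card hused]

end IsProperEdgeColoring

/-! ### Kempe swaps -/

section TwoColors

variable [DecidableEq α]

/-- The spanning subgraph of `G` formed by the edges of colour `a` or `b`; its connected components
are the Kempe chains. -/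
def kempeGraph (G : SimpleGraph V) (c : Sym2 V → α) (a b : α) : SimpleGraph V :=
  G.deleteEdges {e | c e ∉ ({a, b} : Finset α)}

lemma kempeGraph_adj {G : SimpleGraph V} {c : Sym2 V → α} {a b : α} {x y : V} :
    (kempeGraph G c a b).Adj x y ↔ G.Adj x y ∧ c s(x, y) ∈ ({a, b} : Finset α) := by
  simp only [kempeGraph, SimpleGraph.deleteEdges_adj, Set.mem_ofPred_eq, not_not]

lemma isProperEdgeColoring_kempeGraph {G : SimpleGraph V} {K : Finset α} {c : Sym2 V → α}
    (hc : IsProperEdgeColoring G K c) (a b : α) :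
    IsProperEdgeColoring (kempeGraph G c a b) {a, b} c where
  mem _ _ h := (kempeGraph_adj.1 h).2
  injOn x := (hc.injOn x).mono fun _ h ↦ (kempeGraph_adj.1 h).1

lemma mem_freeColors_kempeGraph {G : SimpleGraph V} {K : Finset α} {c : Sym2 V → α} {a : α}
    {u : V} (ha : a ∈ freeColors G K c u) (b : α) :
    a ∈ freeColors (kempeGraph G c a b) {a, b} c u :=
  mem_freeColors.2
    ⟨mem_insert_self a {b}, fun y hy ↦ (mem_freeColors.1 ha).2 y (kempeGraph_adj.1 hy).1⟩

end TwoColors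

lemma card_degree_le_one_le_two_of_connected [Fintype V] {H : SimpleGraph V} [DecidableRel H.Adj]
    (hconn : H.Connected) (hdeg : ∀ x, H.degree x ≤ 2) : #{x | H.degree x ≤ 1} ≤ 2 := by
  classical
  have hedges : Fintype.card V ≤ #H.edgeFinset + 1 := by
    simpa [SimpleGraph.edgeFinset_card] using hconn.card_vert_le_card_edgeSet_add_one
  have hsum : ∑ x, (H.degree x + if H.degree x ≤ 1 then 1 else 0) ≤ ∑ _x : V, 2 := by
    refine sum_le_sum fun x _ ↦ ?_
    have := hdeg x
    split_ifs <;> omega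
  rw [sum_add_distrib, H.sum_degrees_eq_twice_card_edges, ← card_filter, sum_const, smul_eq_mul,
    card_univ] at hsum
  omega

lemma exists_not_reachable_of_degree_le_one [Fintype V] {H : SimpleGraph V} [DecidableRel H.Adj]
    (hdeg : ∀ x, H.degree x ≤ 2) {A : Finset V} (hA : ∀ x ∈ A, H.degree x ≤ 1) (hcard : 2 < #A)
    (u : V) : ∃ w ∈ A, ¬ H.Reachable u w := by
  classical
  by_contra! hreach
  let C := H.connectedComponentMk u
  let inclusion : C.toSimpleGraph.Copy H := (SimpleGraph.Embedding.induce C.supp).toCopy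
  have hdegC (x : C) : C.toSimpleGraph.degree x ≤ H.degree x :=
    inclusion.degree_le x
  have hends : A ⊆ ({x : C | C.toSimpleGraph.degree x ≤ 1} : Finset C).image Subtype.val := by
    intro x hx
    have hxC : x ∈ C := SimpleGraph.ConnectedComponent.sound (hreach x hx).symm
    exact mem_image.2 ⟨⟨x, hxC⟩, by simpa using (hdegC ⟨x, hxC⟩).trans (hA x hx), rfl⟩
  refine hcard.not_ge <| (card_le_card hends).trans <| card_image_le.trans ?_
  exact card_degree_le_one_le_two_of_connected C.connected_toSimpleGraph
    fun x ↦ (hdegC x).trans (hdeg x)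

/-- Recolour each edge by the permutation attached to one of its endpoints. Which endpoint is an
arbitrary choice; the construction is meant for families `π` for which both agree on every edge. -/
noncomputable def recolor (π : V → Equiv.Perm α) (c : Sym2 V → α) (e : Sym2 V) : α :=
  π e.out.1 (c e)

section Recolor

variable {G : SimpleGraph V} {K : Finset α} {c : Sym2 V → α} {π : V → Equiv.Perm α}

lemma recolor_mk {x y : V} (h : π x (c s(x, y)) = π y (c s(x, y))) :
    recolor π c s(x, y) = π x (c s(x, y)) := by
  have hmem : s(x, y).out.1 ∈ s(x, y) := Sym2.out_fst_mem _
  rcases Sym2.mem_iff.1 hmem with hx | hy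
  · rw [recolor, hx]
  · rw [recolor, hy, h]

lemma isProperEdgeColoring_recolor (hc : IsProperEdgeColoring G K c)
    (hK : ∀ x, ∀ a ∈ K, π x a ∈ K)
    (hπ : ∀ x y, G.Adj x y → π x (c s(x, y)) = π y (c s(x, y))) :
    IsProperEdgeColoring G K (recolor π c) where
  mem x y hxy := by
    rw [recolor_mk (hπ x y hxy)]
    exact hK x _ (hc.mem hxy)
  injOn x y hy z hz h := by
    simp only [recolor_mk (hπ x y hy), recolor_mk (hπ x z hz)] at h
    exact hc.eq_of_color_eq hy hz ((π x).injective h)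

lemma apply_mem_freeColors_recolor (hK : ∀ x, ∀ a ∈ K, π x a ∈ K)
    (hπ : ∀ x y, G.Adj x y → π x (c s(x, y)) = π y (c s(x, y))) {u : V} {a : α}
    (ha : a ∈ freeColors G K c u) : π u a ∈ freeColors G K (recolor π c) u := by
  rw [mem_freeColors] at ha ⊢
  refine ⟨hK u a ha.1, fun y hy ↦ ?_⟩
  rw [recolor_mk (hπ u y hy)]
  exact (π u).injective.ne (ha.2 y hy)

end Recolor

section KempePerm

variable [DecidableEq α]

open Classical in
/-- The family of permutations that exchanges `a` and `b` at the vertices of `C` only. -/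
noncomputable def kempePerm (C : Set V) (a b : α) (x : V) : Equiv.Perm α :=
  if x ∈ C then Equiv.swap a b else 1

lemma kempePerm_of_mem {C : Set V} {x : V} (hx : x ∈ C) (a b : α) :
    kempePerm C a b x = Equiv.swap a b :=
  if_pos hx

lemma kempePerm_of_notMem {C : Set V} {x : V} (hx : x ∉ C) (a b : α) :
    kempePerm C a b x = 1 :=
  if_neg hx

lemma kempePerm_congr {C : Set V} {a b : α} {x y : V} (h : x ∈ C ↔ y ∈ C) :
    kempePerm C a b x = kempePerm C a b y := by
  classical exact if_congr h rfl rfl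

lemma kempePerm_apply_of_ne_of_ne (C : Set V) {a b d : α} (hda : d ≠ a) (hdb : d ≠ b) (x : V) :
    kempePerm C a b x d = d := by
  unfold kempePerm
  split_ifs
  · exact Equiv.swap_apply_of_ne_of_ne hda hdb
  · rfl

lemma kempePerm_apply_mem {K : Finset α} {a b : α} (ha : a ∈ K) (hb : b ∈ K) (C : Set V) (x : V) :
    ∀ d ∈ K, kempePerm C a b x d ∈ K := by
  intro d hd
  unfold kempePerm
  split_ifs
  · rw [Equiv.swap_apply_def]
    split_ifs <;> assumption
  · exact hd

lemma kempePerm_apply_color_eq {G : SimpleGraph V} {c : Sym2 V → α} {a b : α} (u : V) {x y : V}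
    (hxy : G.Adj x y) :
    kempePerm {z | (kempeGraph G c a b).Reachable u z} a b x (c s(x, y)) =
      kempePerm {z | (kempeGraph G c a b).Reachable u z} a b y (c s(x, y)) := by
  by_cases hcol : c s(x, y) ∈ ({a, b} : Finset α)
  · have hadj : (kempeGraph G c a b).Adj x y := kempeGraph_adj.2 ⟨hxy, hcol⟩
    have hiff : (kempeGraph G c a b).Reachable u x ↔ (kempeGraph G c a b).Reachable u y :=
      ⟨fun h ↦ h.trans hadj.reachable, fun h ↦ h.trans hadj.symm.reachable⟩
    rw [kempePerm_congr (C := {z | (kempeGraph G c a b).Reachable u z}) hiff]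
  · simp only [mem_insert, mem_singleton, not_or] at hcol
    rw [kempePerm_apply_of_ne_of_ne _ hcol.1 hcol.2, kempePerm_apply_of_ne_of_ne _ hcol.1 hcol.2]

lemma biUnion_ssubset_biUnion_image_kempePerm [Fintype V] {S : V → Finset α} {C : Set V} {a b : α}
    {u w : V} (huC : u ∈ C) (hwC : w ∉ C) (hu : a ∈ S u) (hw : a ∈ S w) (hb : ∀ x, b ∉ S x) :
    univ.biUnion S ⊂ univ.biUnion fun x ↦ (S x).image (kempePerm C a b x) := by
  refine (ssubset_iff_of_subset fun d hd ↦ ?_).2 ⟨b, ?_, by simpa using hb⟩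
  · obtain ⟨x, -, hx⟩ := mem_biUnion.1 hd
    by_cases hda : d = a
    · exact mem_biUnion.2
        ⟨w, mem_univ w, mem_image.2 ⟨a, hw, by rw [kempePerm_of_notMem hwC, hda]; rfl⟩⟩
    · have hdb : d ≠ b := fun h ↦ hb x (h ▸ hx)
      exact mem_biUnion.2
        ⟨x, mem_univ x, mem_image.2 ⟨d, hx, kempePerm_apply_of_ne_of_ne C hda hdb x⟩⟩
  · exact mem_biUnion.2 ⟨u, mem_univ u, mem_image.2
      ⟨a, hu, by rw [kempePerm_of_mem huC, Equiv.swap_apply_left]⟩⟩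

end KempePerm

/-! ### Making a reserved colour unique -/

section Reservations

variable [DecidableEq α] {G : SimpleGraph V} {K : Finset α}

lemma IsProperEdgeColoring.exists_not_reachable_kempeGraph [Finite V] {c : Sym2 V → α}
    (hc : IsProperEdgeColoring G K c) {A : Finset V} {a : α}
    (hA : ∀ x ∈ A, a ∈ freeColors G K c x) (hcard : 2 < #A) (b : α) (u : V) :
    ∃ w ∈ A, ¬ (kempeGraph G c a b).Reachable u w := by
  classical
  have := Fintype.ofFinite V
  have hab : #({a, b} : Finset α) ≤ 2 := card_le_two
  refine exists_not_reachable_of_degree_le_one (fun x ↦ ?_) (fun x hx ↦ ?_) hcard u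
  · have := (isProperEdgeColoring_kempeGraph hc a b).card_freeColors_add_degree x
    omega
  · have := (isProperEdgeColoring_kempeGraph hc a b).card_freeColors_add_degree x
    have : 0 < #(freeColors (kempeGraph G c a b) {a, b} c x) :=
      card_pos.2 ⟨a, mem_freeColors_kempeGraph (hA x hx) b⟩
    omega

variable [Fintype V]

lemma IsProperEdgeColoring.exists_biUnion_ssubset {c : Sym2 V → α}
    (hc : IsProperEdgeColoring G K c) {S : V → Finset α} (hS : ∀ u, S u ⊆ freeColors G K c u)
    {a b : α} (ha : 2 < #{u | a ∈ S u}) (hbK : b ∈ K) (hb : ∀ u, b ∉ S u) :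
    ∃ (c' : Sym2 V → α) (S' : V → Finset α), IsProperEdgeColoring G K c' ∧
      (∀ u, S' u ⊆ freeColors G K c' u) ∧ (∀ u, #(S' u) = #(S u)) ∧
      univ.biUnion S ⊂ univ.biUnion S' := by
  obtain ⟨u, hu⟩ : ({u | a ∈ S u} : Finset V).Nonempty := card_pos.1 (by omega)
  obtain ⟨w, hw, huw⟩ := hc.exists_not_reachable_kempeGraph
    (fun x hx ↦ hS x (mem_filter.1 hx).2) ha b u
  rw [mem_filter_univ] at hu hw
  have haK : a ∈ K := freeColors_subset _ _ _ _ (hS u hu)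
  let C : Set V := {x | (kempeGraph G c a b).Reachable u x}
  have hπK := kempePerm_apply_mem haK hbK C
  have hπ : ∀ x y, G.Adj x y → kempePerm C a b x (c s(x, y)) = kempePerm C a b y (c s(x, y)) :=
    fun x y ↦ kempePerm_apply_color_eq u
  refine ⟨recolor (kempePerm C a b) c, fun x ↦ (S x).image (kempePerm C a b x),
    isProperEdgeColoring_recolor hc hπK hπ, fun x ↦ image_subset_iff.2 fun d hd ↦ ?_,
    fun x ↦ card_image_of_injective _ (kempePerm C a b x).injective, ?_⟩
  · exact apply_mem_freeColors_recolor hπK hπ (hS x hd)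
  · exact biUnion_ssubset_biUnion_image_kempePerm (SimpleGraph.Reachable.refl u) huw hu hw hb

lemma exists_existsUnique_mem_or_exists_two_lt_card {S : V → Finset α}
    (hSK : ∀ u, S u ⊆ K) (hodd : Odd (∑ u, #(S u))) (hlt : ∑ u, #(S u) < 2 * #K) :
    (∃ a ∈ K, ∃! u, a ∈ S u) ∨
      (∃ a ∈ K, 2 < #{u | a ∈ S u}) ∧ ∃ b ∈ K, ∀ u, b ∉ S u := by
  have hcount : ∑ a ∈ K, #{u | a ∈ S u} = ∑ u, #(S u) := by
    have h := sum_card_bipartiteAbove_eq_sum_card_bipartiteBelow (s := K) (t := univ)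
      (fun a u ↦ a ∈ S u)
    simpa only [bipartiteAbove, bipartiteBelow, filter_mem_eq_inter,
      inter_eq_right.2 (hSK _)] using h
  by_cases hone : ∃ a ∈ K, #{u | a ∈ S u} = 1
  · obtain ⟨a, haK, ha⟩ := hone
    exact .inl ⟨a, haK, by simpa using card_eq_one_iff_existsUnique.1 ha⟩
  push Not at hone
  refine .inr ⟨?_, ?_⟩
  · obtain ⟨a, haK, ha⟩ : ∃ a ∈ K, Odd #{u | a ∈ S u} := by
      by_contra! heven
      simp only [Nat.not_odd_iff_even] at heven
      exact Nat.not_odd_iff_even.2 (even_sum _ heven) (hcount ▸ hodd)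
    have := hone a haK
    exact ⟨a, haK, by obtain ⟨k, hk⟩ := ha; omega⟩
  · obtain ⟨b, hbK, hb⟩ : ∃ b ∈ K, #{u | b ∈ S u} < 2 :=
      exists_lt_of_sum_lt (by rw [hcount, sum_const, smul_eq_mul]; omega)
    have hempty : #{u | b ∈ S u} = 0 := by
      have := hone b hbK
      omega
    exact ⟨b, hbK, by simpa [filter_eq_empty_iff] using hempty⟩

end Reservations

theorem IsProperEdgeColoring.exists_existsUnique_mem [Fintype V] {G : SimpleGraph V} {K : Finset α}
    {c : Sym2 V → α} (hc : IsProperEdgeColoring G K c) {S : V → Finset α}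
    (hS : ∀ u, S u ⊆ freeColors G K c u) (hodd : Odd (∑ u, #(S u)))
    (hlt : ∑ u, #(S u) < 2 * #K) :
    ∃ (c' : Sym2 V → α) (S' : V → Finset α), IsProperEdgeColoring G K c' ∧
      (∀ u, S' u ⊆ freeColors G K c' u) ∧ (∀ u, #(S' u) = #(S u)) ∧
      ∃ a ∈ K, ∃! u, a ∈ S' u := by
  classical
  induction hn : #K - #(univ.biUnion S) using Nat.strong_induction_on generalizing c S with
  | _ n ih =>
  rcases exists_existsUnique_mem_or_exists_two_lt_card
    (fun u ↦ (hS u).trans (freeColors_subset G K c u)) hodd hlt with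
    hunique | ⟨⟨a, -, ha⟩, b, hbK, hb⟩
  · exact ⟨c, S, hc, hS, fun _ ↦ rfl, hunique⟩
  obtain ⟨c₁, S₁, hc₁, hS₁, hcard₁, hunion⟩ := hc.exists_biUnion_ssubset hS ha hbK hb
  have hunionK : univ.biUnion S₁ ⊆ K :=
    biUnion_subset.2 fun u _ ↦ (hS₁ u).trans (freeColors_subset G K c₁ u)
  have hfewer : #K - #(univ.biUnion S₁) < n := by
    have := card_lt_card hunion
    have := card_le_card hunionK
    omega
  obtain ⟨c', S', hc', hS', hcard', hunique⟩ :=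
    ih _ hfewer hc₁ hS₁ (by simpa only [hcard₁] using hodd) (by simpa only [hcard₁] using hlt) rfl
  exact ⟨c', S', hc', hS', fun u ↦ (hcard' u).trans (hcard₁ u), hunique⟩

/-! ### Distinct free colours -/

section KeepColor

variable [DecidableEq α]

/-- Keep the edges to which `c₁` gives the colour `a`, and colour all others by `c₂`. This undoes
the removal of a colour class. -/
def keepColor (c₁ : Sym2 V → α) (a : α) (c₂ : Sym2 V → α) (e : Sym2 V) : α :=
  if c₁ e = a then a else c₂ e

variable {G : SimpleGraph V} {K : Finset α} {c₁ c₂ : Sym2 V → α} {a : α}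

lemma keepColor_eq_iff
    (hc₂ : IsProperEdgeColoring (G.deleteEdges {e | c₁ e = a}) (K.erase a) c₂) {x y : V}
    (hxy : G.Adj x y) : keepColor c₁ a c₂ s(x, y) = a ↔ c₁ s(x, y) = a := by
  by_cases h : c₁ s(x, y) = a
  · simp [keepColor, h]
  · have : c₂ s(x, y) ∈ K.erase a := hc₂.mem (SimpleGraph.deleteEdges_adj.2 ⟨hxy, h⟩)
    simp [keepColor, h, ne_of_mem_erase this]

lemma isProperEdgeColoring_keepColor (hc₁ : IsProperEdgeColoring G K c₁) (ha : a ∈ K)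
    (hc₂ : IsProperEdgeColoring (G.deleteEdges {e | c₁ e = a}) (K.erase a) c₂) :
    IsProperEdgeColoring G K (keepColor c₁ a c₂) where
  mem x y hxy := by
    unfold keepColor
    split_ifs with h
    · exact ha
    · exact mem_of_mem_erase (hc₂.mem (SimpleGraph.deleteEdges_adj.2 ⟨hxy, h⟩))
  injOn x y hy z hz hyz := by
    by_cases hya : c₁ s(x, y) = a
    · have hza : c₁ s(x, z) = a :=
        (keepColor_eq_iff hc₂ hz).1 (hyz.symm.trans ((keepColor_eq_iff hc₂ hy).2 hya))
      exact hc₁.eq_of_color_eq hy hz (hya.trans hza.symm)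
    · have hza : c₁ s(x, z) ≠ a := fun h ↦
        hya ((keepColor_eq_iff hc₂ hy).1 (hyz.trans ((keepColor_eq_iff hc₂ hz).2 h)))
      simp only [keepColor, hya, hza, if_false] at hyz
      exact hc₂.eq_of_color_eq (SimpleGraph.deleteEdges_adj.2 ⟨hy, hya⟩)
        (SimpleGraph.deleteEdges_adj.2 ⟨hz, hza⟩) hyz

lemma mem_freeColors_keepColor_self {u : V} (ha : a ∈ freeColors G K c₁ u)
    (hc₂ : IsProperEdgeColoring (G.deleteEdges {e | c₁ e = a}) (K.erase a) c₂) :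
    a ∈ freeColors G K (keepColor c₁ a c₂) u := by
  rw [mem_freeColors] at ha ⊢
  exact ⟨ha.1, fun y hy ↦ (keepColor_eq_iff hc₂ hy).not.2 (ha.2 y hy)⟩

lemma freeColors_deleteEdges_subset_freeColors_keepColor (u : V) :
    freeColors (G.deleteEdges {e | c₁ e = a}) (K.erase a) c₂ u ⊆
      freeColors G K (keepColor c₁ a c₂) u := by
  intro b hb
  rw [mem_freeColors] at hb ⊢
  refine ⟨mem_of_mem_erase hb.1, fun y hy ↦ ?_⟩
  unfold keepColor
  split_ifs with h
  · exact (ne_of_mem_erase hb.1).symm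
  · exact hb.2 y (SimpleGraph.deleteEdges_adj.2 ⟨hy, h⟩)

end KeepColor

lemma IsProperEdgeColoring.deleteEdges_color [DecidableEq α] {G : SimpleGraph V} {K : Finset α}
    {c : Sym2 V → α} (hc : IsProperEdgeColoring G K c) (a : α) :
    IsProperEdgeColoring (G.deleteEdges {e | c e = a}) (K.erase a) c where
  mem _ _ h :=
    have h := SimpleGraph.deleteEdges_adj.1 h
    mem_erase.2 ⟨h.2, hc.mem h.1⟩
  injOn x := (hc.injOn x).mono fun _ h ↦ (SimpleGraph.deleteEdges_adj.1 h).1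

lemma erase_freeColors_subset [DecidableEq α] (G : SimpleGraph V) (K : Finset α) (c : Sym2 V → α)
    (a : α) (u : V) :
    (freeColors G K c u).erase a ⊆ freeColors (G.deleteEdges {e | c e = a}) (K.erase a) c u := by
  intro b hb
  rw [mem_erase, mem_freeColors] at hb
  exact mem_freeColors.2 ⟨mem_erase.2 ⟨hb.1, hb.2.1⟩,
    fun y hy ↦ hb.2.2 y (SimpleGraph.deleteEdges_adj.1 hy).1⟩

lemma injOn_update_of_injOn_erase [DecidableEq V] {N : Finset V} {u : V} {f : V → α} {a : α}
    (hf : Set.InjOn f (N.erase u)) (ha : ∀ w ∈ N.erase u, f w ≠ a) :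
    Set.InjOn (Function.update f u a) N := by
  intro x hx y hy hxy
  by_cases hxu : x = u <;> by_cases hyu : y = u
  · exact hxu.trans hyu.symm
  · rw [hxu, Function.update_self, Function.update_of_ne hyu] at hxy
    exact absurd hxy.symm (ha y (mem_erase.2 ⟨hyu, hy⟩))
  · rw [hyu, Function.update_self, Function.update_of_ne hxu] at hxy
    exact absurd hxy (ha x (mem_erase.2 ⟨hxu, hx⟩))
  · rw [Function.update_of_ne hxu, Function.update_of_ne hyu] at hxy
    exact hf (mem_erase.2 ⟨hxu, hx⟩) (mem_erase.2 ⟨hyu, hy⟩) hxy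

lemma IsProperEdgeColoring.exists_injOn_freeColors_of_deleteEdges [DecidableEq V] [DecidableEq α]
    {G : SimpleGraph V} {K : Finset α} {c₁ c₂ : Sym2 V → α} {N : Finset V} {f : V → α} {u : V}
    {a : α} (hc₁ : IsProperEdgeColoring G K c₁) (ha : a ∈ freeColors G K c₁ u)
    (hc₂ : IsProperEdgeColoring (G.deleteEdges {e | c₁ e = a}) (K.erase a) c₂)
    (hf : Set.InjOn f (N.erase u))
    (hfree : ∀ w ∈ N.erase u,
      f w ∈ freeColors (G.deleteEdges {e | c₁ e = a}) (K.erase a) c₂ w) :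
    ∃ (c' : Sym2 V → α) (f' : V → α), IsProperEdgeColoring G K c' ∧ Set.InjOn f' N ∧
      ∀ w ∈ N, f' w ∈ freeColors G K c' w := by
  refine ⟨keepColor c₁ a c₂, Function.update f u a,
    isProperEdgeColoring_keepColor hc₁ (mem_freeColors.1 ha).1 hc₂,
    injOn_update_of_injOn_erase hf fun w hw ↦
      ne_of_mem_erase (freeColors_subset _ _ _ _ (hfree w hw)), fun w hw ↦ ?_⟩
  by_cases hwu : w = u
  · rw [hwu, Function.update_self]
    exact mem_freeColors_keepColor_self ha hc₂
  · rw [Function.update_of_ne hwu]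
    exact freeColors_deleteEdges_subset_freeColors_keepColor w (hfree w (mem_erase.2 ⟨hwu, hw⟩))

section OneOrTwo

variable [DecidableEq V] {N : Finset V}

lemma exists_subset_card_eq_one_or_two {F : V → Finset α} (hN : N.Nonempty) {u₀ : V}
    (hone : ∀ u ∈ N, 1 ≤ #(F u)) (htwo : ∀ u ∈ N, u ≠ u₀ → 2 ≤ #(F u)) :
    ∃ v₀ ∈ N, ∃ T : V → Finset α, (∀ u, T u ⊆ F u) ∧
      ∀ u, #(T u) = if u ∈ N then if u = v₀ then 1 else 2 else 0 := by
  obtain ⟨v₀, hv₀, htwo'⟩ : ∃ v₀ ∈ N, ∀ u ∈ N, u ≠ v₀ → 2 ≤ #(F u) := by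
    by_cases hu₀ : u₀ ∈ N
    · exact ⟨u₀, hu₀, htwo⟩
    · obtain ⟨v₀, hv₀⟩ := hN
      exact ⟨v₀, hv₀, fun u hu _ ↦ htwo u hu (ne_of_mem_of_not_mem hu hu₀)⟩
  have hcard (u : V) : (if u ∈ N then if u = v₀ then 1 else 2 else 0) ≤ #(F u) := by
    split_ifs with hu h
    · exact hone u hu
    · exact htwo' u hu h
    · exact Nat.zero_le _
  choose T hTF hT using fun u ↦ exists_subset_card_eq (hcard u)
  exact ⟨v₀, hv₀, T, hTF, hT⟩

lemma sum_one_or_two_add_one [Fintype V] {v₀ : V} (hv₀ : v₀ ∈ N) :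
    (∑ u, if u ∈ N then if u = v₀ then 1 else 2 else 0) + 1 = 2 * #N := by
  have hrest : ∀ u ∈ N.erase v₀, (if u = v₀ then 1 else 2) = 2 :=
    fun u hu ↦ if_neg (ne_of_mem_erase hu)
  rw [sum_ite_mem, univ_inter, ← add_sum_erase N _ hv₀, if_pos rfl, sum_congr rfl hrest, sum_const,
    smul_eq_mul]
  have := card_erase_add_one hv₀
  omega

end OneOrTwo

theorem IsProperEdgeColoring.exists_injOn_freeColors [Finite V] {G : SimpleGraph V}
    {K : Finset α} {c : Sym2 V → α} (hc : IsProperEdgeColoring G K c) {N : Finset V}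
    (hNK : #N ≤ #K) {u₀ : V} (hone : ∀ u ∈ N, 1 ≤ #(freeColors G K c u))
    (htwo : ∀ u ∈ N, u ≠ u₀ → 2 ≤ #(freeColors G K c u)) :
    ∃ (c' : Sym2 V → α) (f : V → α), IsProperEdgeColoring G K c' ∧ Set.InjOn f N ∧
      ∀ u ∈ N, f u ∈ freeColors G K c' u := by
  classical
  have := Fintype.ofFinite V
  induction N using Finset.strongInduction generalizing G K c u₀ with
  | H N ih =>
  rcases N.eq_empty_or_nonempty with rfl | hN
  · exact ⟨c, fun u ↦ c s(u, u), hc, by simp, by simp⟩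
  obtain ⟨v₀, hv₀, T, hTfree, hTcard⟩ := exists_subset_card_eq_one_or_two hN hone htwo
  have hsum : ∑ u, #(T u) + 1 = 2 * #N := by
    simpa only [hTcard] using sum_one_or_two_add_one hv₀
  obtain ⟨c₁, S, hc₁, hSfree, hScard, a, haK, u, hau, huniq⟩ :=
    hc.exists_existsUnique_mem hTfree ⟨#N - 1, by omega⟩ (by omega)
  simp only [hTcard] at hScard
  have huN : u ∈ N := by
    by_contra hu
    exact (card_pos.2 ⟨a, hau⟩).ne' ((hScard u).trans (if_neg hu))
  have hSfree' : ∀ w ∈ N.erase u,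
      S w ⊆ freeColors (G.deleteEdges {e | c₁ e = a}) (K.erase a) c₁ w := by
    intro w hw
    have haw : a ∉ S w := fun h ↦ ne_of_mem_erase hw (huniq w h)
    exact (subset_erase.2 ⟨hSfree w, haw⟩).trans (erase_freeColors_subset G K c₁ a w)
  obtain ⟨c₂, f, hc₂, hf, hfree⟩ :=
    ih (N.erase u) (erase_ssubset huN) (hc₁.deleteEdges_color a) (u₀ := v₀)
      (by rw [card_erase_of_mem huN, card_erase_of_mem haK]; omega)
      (fun w hw ↦ le_trans (by rw [hScard, if_pos (mem_of_mem_erase hw)]; split_ifs <;> omega)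
        (card_le_card (hSfree' w hw)))
      (fun w hw hwv₀ ↦ le_trans (by rw [hScard, if_pos (mem_of_mem_erase hw), if_neg hwv₀])
        (card_le_card (hSfree' w hw)))
  exact hc₁.exists_injOn_freeColors_of_deleteEdges (hSfree u hau) hc₂ hf hfree

/-! ### Vizing's theorem -/

section StarColoring

open Classical in
/-- Colour each edge `vy` at `v` by `f y`, and all other edges by `c`. -/
noncomputable def starColoring (v : V) (f : V → α) (c : Sym2 V → α) (e : Sym2 V) : α :=
  if h : v ∈ e then f (Sym2.Mem.other h) else c e

lemma starColoring_mk (v : V) (f : V → α) (c : Sym2 V → α) (y : V) :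
    starColoring v f c s(v, y) = f y := by
  have hv : v ∈ s(v, y) := Sym2.mem_mk_left v y
  rw [starColoring, dif_pos hv, Sym2.congr_right.1 (Sym2.other_spec hv)]

lemma starColoring_of_notMem {v : V} {e : Sym2 V} (he : v ∉ e) (f : V → α) (c : Sym2 V → α) :
    starColoring v f c e = c e :=
  dif_neg he

variable {G : SimpleGraph V} {K : Finset α} {c : Sym2 V → α} {v : V} {f : V → α}

lemma starColoring_mk_ne (hfree : ∀ u, G.Adj v u → f u ∈ freeColors (G.deleteIncidenceSet v) K c u)
    {x y : V} (hx : x ≠ v) (hxv : G.Adj x v) (hy : y ≠ v) (hxy : G.Adj x y) :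
    starColoring v f c s(x, y) ≠ starColoring v f c s(x, v) := by
  rw [Sym2.eq_swap (a := x) (b := v), starColoring_mk,
    starColoring_of_notMem (by simp [hx.symm, hy.symm])]
  exact (mem_freeColors.1 (hfree x hxv.symm)).2 y
    (SimpleGraph.deleteIncidenceSet_adj.2 ⟨hxy, hx, hy⟩)

lemma isProperEdgeColoring_starColoring (hc : IsProperEdgeColoring (G.deleteIncidenceSet v) K c)
    (hf : Set.InjOn f (G.neighborSet v))
    (hfree : ∀ u, G.Adj v u → f u ∈ freeColors (G.deleteIncidenceSet v) K c u) :
    IsProperEdgeColoring G K (starColoring v f c) where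
  mem x y hxy := by
    have hfK : ∀ u, G.Adj v u → f u ∈ K := fun u hu ↦ freeColors_subset _ _ _ _ (hfree u hu)
    by_cases hx : x = v
    · rw [hx, starColoring_mk]
      exact hfK y (hx ▸ hxy)
    by_cases hy : y = v
    · rw [hy, Sym2.eq_swap, starColoring_mk]
      exact hfK x (hy ▸ hxy.symm)
    rw [starColoring_of_notMem (by simp [Ne.symm hx, Ne.symm hy])]
    exact hc.mem (SimpleGraph.deleteIncidenceSet_adj.2 ⟨hxy, hx, hy⟩)
  injOn x y hy z hz hyz := by
    rw [SimpleGraph.mem_neighborSet] at hy hz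
    by_cases hx : x = v
    · subst hx
      simp only [starColoring_mk] at hyz
      exact hf hy hz hyz
    by_cases hyv : y = v <;> by_cases hzv : z = v
    · exact hyv.trans hzv.symm
    · subst hyv
      exact absurd hyz.symm (starColoring_mk_ne hfree hx hy hzv hz)
    · subst hzv
      exact absurd hyz (starColoring_mk_ne hfree hx hz hyv hy)
    · simp only [starColoring_of_notMem (c := c) (f := f) (e := s(x, y)) (v := v)
        (by simp [Ne.symm hx, Ne.symm hyv]),
        starColoring_of_notMem (c := c) (f := f) (e := s(x, z)) (v := v)
        (by simp [Ne.symm hx, Ne.symm hzv])] at hyz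
      exact hc.eq_of_color_eq (SimpleGraph.deleteIncidenceSet_adj.2 ⟨hy, hx, hyv⟩)
        (SimpleGraph.deleteIncidenceSet_adj.2 ⟨hz, hx, hzv⟩) hyz

end StarColoring

lemma degree_deleteIncidenceSet_lt [Fintype V] [DecidableEq V] {G : SimpleGraph V}
    [DecidableRel G.Adj] {u v : V} (h : G.Adj v u) :
    (G.deleteIncidenceSet v).degree u < G.degree u := by
  refine card_lt_card ((ssubset_iff_of_subset fun y hy ↦ ?_).2 ⟨v, ?_, ?_⟩)
  · rw [SimpleGraph.mem_neighborFinset] at hy ⊢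
    exact SimpleGraph.deleteIncidenceSet_le G v hy
  · simpa using h.symm
  · simp [SimpleGraph.deleteIncidenceSet_adj]

theorem exists_isProperEdgeColoring_of_deleteIncidenceSet [Fintype V] {G : SimpleGraph V}
    [DecidableRel G.Adj] {K : Finset α} {c : Sym2 V → α} {v u₀ : V} (hv : G.degree v ≤ #K)
    (hle : ∀ u, G.Adj v u → G.degree u ≤ #K)
    (hlt : ∀ u, G.Adj v u → u ≠ u₀ → G.degree u < #K)
    (hc : IsProperEdgeColoring (G.deleteIncidenceSet v) K c) :
    ∃ c', IsProperEdgeColoring G K c' := by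
  classical
  have hcard (u : V) (hu : u ∈ G.neighborFinset v) :
      #K < #(freeColors (G.deleteIncidenceSet v) K c u) + G.degree u := by
    rw [SimpleGraph.mem_neighborFinset] at hu
    have := hc.card_freeColors_add_degree u
    have := degree_deleteIncidenceSet_lt hu
    omega
  obtain ⟨c', f, hc', hf, hfree⟩ := hc.exists_injOn_freeColors (N := G.neighborFinset v) (u₀ := u₀)
    (by rwa [G.card_neighborFinset_eq_degree])
    (fun u hu ↦ by
      have := hcard u hu
      have := hle u (by simpa using hu)
      omega)
    (fun u hu hne ↦ by
      have := hcard u hu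
      have := hlt u (by simpa using hu) hne
      omega)
  exact ⟨starColoring v f c', isProperEdgeColoring_starColoring hc'
    (by simpa using hf) fun u hu ↦ hfree u (by simpa using hu)⟩

theorem exists_isProperEdgeColoring_of_degree_lt_card [Fintype V] (G : SimpleGraph V)
    [DecidableRel G.Adj] {K : Finset α} (hK : ∀ v, G.degree v < #K) :
    ∃ c, IsProperEdgeColoring G K c := by
  classical
  cases isEmpty_or_nonempty V with
  | inl _ => exact ⟨isEmptyElim, fun x ↦ isEmptyElim x, isEmptyElim⟩
  | inr hV =>
  obtain ⟨a, -⟩ : K.Nonempty := card_pos.1 ((Nat.zero_le _).trans_lt (hK hV.some))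
  obtain ⟨T, hT⟩ : ∃ T : Finset V, G.support ⊆ T := ⟨univ, by simp⟩
  induction T using Finset.induction_on generalizing G with
  | empty =>
    rw [coe_empty, Set.subset_empty_iff, SimpleGraph.support_eq_bot_iff] at hT
    subst hT
    exact ⟨fun _ ↦ a, fun _ _ h ↦ h.elim, fun _ _ h ↦ h.elim⟩
  | insert v T _ ih =>
    have hsupport : (G.deleteIncidenceSet v).support ⊆ T :=
      (G.support_deleteIncidenceSet_subset v).trans (by simpa [Set.sdiff_subset_iff] using hT)
    obtain ⟨c, hc⟩ := ih (G.deleteIncidenceSet v)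
      (fun u ↦ (SimpleGraph.degree_le_of_le (G.deleteIncidenceSet_le v)).trans_lt (hK u)) hsupport
    exact exists_isProperEdgeColoring_of_deleteIncidenceSet (u₀ := v) (hK v).le
      (fun u _ ↦ (hK u).le) (fun u _ _ ↦ hK u) hc

/-! ### The random colour class -/

/-- The edges of `G` to which `c` gives the colour `a`. -/
def colorClass [Fintype V] [DecidableEq α] (G : SimpleGraph V) [DecidableRel G.Adj]
    (c : Sym2 V → α) (a : α) : Finset (Sym2 V) :=
  {e ∈ G.edgeFinset | c e = a}

section ColorClass

variable [Fintype V] [DecidableEq α] {G : SimpleGraph V} [DecidableRel G.Adj]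
  {K : Finset α} {c : Sym2 V → α}

lemma mem_colorClass {a : α} {e : Sym2 V} : e ∈ colorClass G c a ↔ e ∈ G.edgeSet ∧ c e = a := by
  rw [colorClass, mem_filter, SimpleGraph.mem_edgeFinset]

lemma IsProperEdgeColoring.isMatchingSet_colorClass (hc : IsProperEdgeColoring G K c) (a : α) :
    IsMatchingSet G (colorClass G c a) := by
  refine ⟨fun e he ↦ (mem_colorClass.1 he).1, ?_⟩
  rintro e he f hf hne v ⟨hve, hvf⟩
  obtain ⟨x, rfl⟩ := Sym2.mem_iff_exists.1 hve
  obtain ⟨y, rfl⟩ := Sym2.mem_iff_exists.1 hvf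
  rw [mem_colorClass] at he hf
  exact hne (congrArg _ (hc.eq_of_color_eq he.1 hf.1 (he.2.trans hf.2.symm)))

lemma mem_freeColors_iff_not_exists_mem_colorClass {a : α} {v : V} :
    a ∈ freeColors G K c v ↔ a ∈ K ∧ ¬ ∃ e ∈ colorClass G c a, v ∈ e := by
  rw [mem_freeColors, and_congr_right_iff]
  refine fun _ ↦ ⟨?_, fun h y hy hya ↦ h ⟨s(v, y), mem_colorClass.2 ⟨hy, hya⟩, by simp⟩⟩
  rintro h ⟨e, he, hve⟩
  obtain ⟨y, rfl⟩ := Sym2.mem_iff_exists.1 hve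
  exact h y (mem_colorClass.1 he).1 (mem_colorClass.1 he).2

/-- The distribution of the matching formed by the edges of a uniformly random colour. -/
noncomputable def randomColorClass (hc : IsProperEdgeColoring G K c) (hK : K.Nonempty) :
    PMF {M : Finset (Sym2 V) // IsMatchingSet G M} :=
  (PMF.uniformOfFinset K hK).map fun a ↦ ⟨colorClass G c a, hc.isMatchingSet_colorClass a⟩

lemma toOuterMeasure_randomColorClass (hc : IsProperEdgeColoring G K c) (hK : K.Nonempty)
    (v : V) :
    (randomColorClass hc hK).toOuterMeasure {M | ¬ ∃ e ∈ M.1, v ∈ e} =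
      (#K - G.degree v : ENNReal) / #K := by
  classical
  rw [randomColorClass, PMF.toOuterMeasure_map_apply, PMF.toOuterMeasure_uniformOfFinset_apply]
  have hdeg : (#K - G.degree v : ENNReal) = #(freeColors G K c v) := by
    rw [← hc.card_freeColors_add_degree v, Nat.cast_add,
      ENNReal.add_sub_cancel_right (ENNReal.natCast_ne_top _)]
  rw [hdeg]
  congr! 3
  ext a
  exact mem_filter.trans mem_freeColors_iff_not_exists_mem_colorClass.symm

end ColorClass

end EdgeColoring

theorem exists_fair_matching_distribution_general {V : Type*} [Fintype V]
    (G : SimpleGraph V) [DecidableRel G.Adj] :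
    ∃ p : PMF {M : Finset (Sym2 V) // IsMatchingSet G M},
      ∀ v : V, p.toOuterMeasure {M | ¬ ∃ e ∈ M.1, v ∈ e} =
        (G.maxDegree + 1 - G.degree v : ENNReal) / (G.maxDegree + 1) := by
  classical
  obtain ⟨c, hc⟩ := exists_isProperEdgeColoring_of_degree_lt_card G (K := range (G.maxDegree + 1))
    fun v ↦ by simpa [Nat.lt_succ_iff] using G.degree_le_maxDegree v
  refine ⟨randomColorClass hc nonempty_range_add_one, fun v ↦ ?_⟩
  rw [toOuterMeasure_randomColorClass, card_range, Nat.cast_add_one]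

/-- **Existence of fair matching distributions.** For every finite simple graph
`G` with maximum degree `Δ ≥ 1`, there is a probability distribution (PMF) over
matchings of `G` such that every vertex of degree `Δ` is left uncovered by the
random matching with probability at most `1/Δ`. -/
theorem exists_fair_matching_distribution {V : Type*} [Fintype V] [DecidableEq V]
    (G : SimpleGraph V) [DecidableRel G.Adj] (hΔ : 1 ≤ G.maxDegree) :
    ∃ p : PMF {M : Finset (Sym2 V) // IsMatchingSet G M},
      ∀ v : V, G.degree v = G.maxDegree →
        p.toOuterMeasure {M | ¬ ∃ e ∈ M.1, v ∈ e} ≤ 1 / (G.maxDegree : ENNReal) := by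
  obtain ⟨p, hp⟩ := exists_fair_matching_distribution_general G
  refine ⟨p, fun v hv ↦ ?_⟩
  rw [hp, hv, ENNReal.add_sub_cancel_left (ENNReal.natCast_ne_top _)]
  exact ENNReal.div_le_div_left le_self_add 1
end

section
/- There is an absolute constant C > 0 such that every finite simple graph G = (V, E) on n ≥ 2 vertices admits a proper edge coloring φ : E → ℕ with the property that every edge e = (u, v) satisfies φ(e) ≤ max(deg(u), deg(v)) + C · log n. -/
/-!
Induct on the maximum degree `t`. Color the graph properly with `t + 1` colors by Vizing's theorem
and pick a color `m v` missing at every vertex `v`. For colors `a ≠ b`, consider the matching `M` of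
the edges colored `a` that touch a vertex of degree `t`, and the matching `D` of the edges colored
`b` that touch a vertex `v` of degree `t` with `m v = a`. A vertex of degree `t` misses only one
color, so it is covered by `M` or by `D`, and deleting `M ⊔ D` lowers the maximum degree. The edges
of `M` receive the color `t`, those of `D` are deferred, and the induction continues with the rest.

Every edge lies in `D` for at most two of the `t (t + 1)` pairs `(a, b)`. Averaging over the pairs,
`D` can thus be chosen so that a weighted sum `∑ v, w v * 2 ^ D.degree v` exceeds `∑ v, w v` by a
factor of at most `(t + 3) / (t + 1)`. The product of these factors telescopes to a quadratic
polynomial, hence the graph `F` of all deferred edges satisfies `∑ v, 2 ^ F.degree v = O(n ^ 3)` and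
has maximum degree `O(log n)`. Vizing's theorem colors `F` with `O(log n)` colors, which are put
below all the other colors.
-/

open Finset

namespace LocalVizing

variable {V κ : Type*} {G H : SimpleGraph V} {c : Sym2 V → κ} {a b : κ} {v x z : V}

/-- Proper edge coloring of `G`. A coloring assigns a color to every unordered pair, the values off
the edges of `G` being irrelevant, so that one function can color several graphs on `V`. -/
def IsProperEdgeColoring (G : SimpleGraph V) (c : Sym2 V → κ) : Prop :=
  ∀ ⦃v x y⦄, G.Adj v x → G.Adj v y → c s(v, x) = c s(v, y) → x = y

/-- The color `a` is missing at `v`: no edge of `G` at `v` has this color. -/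
def IsMissing (G : SimpleGraph V) (c : Sym2 V → κ) (v : V) (a : κ) : Prop :=
  ∀ ⦃w⦄, G.Adj v w → c s(v, w) ≠ a

theorem IsMissing.mono (hGH : G ≤ H) (h : IsMissing H c v a) : IsMissing G c v a :=
  fun _ hw => h (hGH hw)

namespace IsProperEdgeColoring

theorem mono (hGH : G ≤ H) (hc : IsProperEdgeColoring H c) : IsProperEdgeColoring G c :=
  fun _ _ _ hx hy => hc (hGH hx) (hGH hy)

theorem degree_le_card (hc : IsProperEdgeColoring G c) [Fintype (G.neighborSet v)] {T : Finset κ}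
    (hT : ∀ w, G.Adj v w → c s(v, w) ∈ T) : G.degree v ≤ #T :=
  card_le_card_of_injOn (fun w => c s(v, w)) (fun w hw => hT w (by simpa using hw))
    fun _ hx _ hy => hc (by simpa using hx) (by simpa using hy)

theorem update [DecidableEq V] {y : V}
    (hc : IsProperEdgeColoring (G.deleteEdges {s(x, y)}) c)
    (hx : IsMissing (G.deleteEdges {s(x, y)}) c x a)
    (hy : IsMissing (G.deleteEdges {s(x, y)}) c y a) :
    IsProperEdgeColoring G (Function.update c s(x, y) a) := by
  simp only [IsProperEdgeColoring, IsMissing, SimpleGraph.deleteEdges_adj,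
    Set.mem_singleton_iff] at *
  intro v p q hp hq h
  grind [Function.update_apply]

theorem rotate [DecidableEq V] {y : V}
    (hc : IsProperEdgeColoring (G.deleteEdges {s(x, y)}) c) (hxz : G.Adj x z) (hzy : z ≠ y)
    (hy : IsMissing (G.deleteEdges {s(x, y)}) c y (c s(x, z))) :
    IsProperEdgeColoring (G.deleteEdges {s(x, z)}) (Function.update c s(x, y) (c s(x, z))) := by
  have hle : (G.deleteEdges {s(x, z)}).deleteEdges {s(x, y)} ≤ G.deleteEdges {s(x, y)} :=
    SimpleGraph.deleteEdges_mono (SimpleGraph.deleteEdges_le _)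
  refine (hc.mono hle).update (fun w hw hwz => ?_) (hy.mono hle)
  have : w = z := hc (hle hw) (by simp [hxz, hzy, hxz.ne']) hwz
  simp [this] at hw

end IsProperEdgeColoring

theorem exists_isMissing [Fintype κ] (c : Sym2 V → κ) [Fintype (G.neighborSet v)]
    (h : G.degree v < Fintype.card κ) : ∃ a, IsMissing G c v a := by
  classical
  obtain ⟨a, -, ha⟩ := exists_mem_notMem_of_card_lt_card
    ((card_image_le (s := G.neighborFinset v) (f := fun w => c s(v, w))).trans_lt h)
  exact ⟨a, fun w hw hwa => ha (mem_image.2 ⟨w, by simpa using hw, hwa⟩)⟩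

/-- The vertices `y 0, …, y j` form a Vizing fan at `x`, where the edge `s(x, y 0)` of `G` is not
colored yet. The fan is encoded as an initial segment of a sequence to make its truncations and
shifts fans of the same kind. -/
structure IsFan (G : SimpleGraph V) (c : Sym2 V → κ) (x : V) (y : ℕ → V) (j : ℕ) : Prop where
  adj : ∀ i ≤ j, G.Adj x (y i)
  injOn : Set.InjOn y (Set.Iic j)
  isMissing : ∀ i < j, IsMissing (G.deleteEdges {s(x, y 0)}) c (y i) (c s(x, y (i + 1)))

theorem IsMissing.update_of_notMem [DecidableEq V] {e : Sym2 V} {s : Set (Sym2 V)}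
    (h : IsMissing (G.deleteEdges {e}) c v a) (hv : v ∉ e) :
    IsMissing (G.deleteEdges s) (Function.update c e b) v a := by
  intro w hw
  have hne : s(v, w) ≠ e := by rintro rfl; simp at hv
  rw [Function.update_of_ne hne]
  exact h (by simpa [hne] using SimpleGraph.deleteEdges_le _ hw)

namespace IsFan

variable {y : ℕ → V} {i j : ℕ}

theorem mono (h : IsFan G c x y j) (hij : i ≤ j) : IsFan G c x y i where
  adj k hk := h.adj k (hk.trans hij)
  injOn := h.injOn.mono (Set.Iic_subset_Iic.2 hij)
  isMissing k hk := h.isMissing k (hk.trans_le hij)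

theorem succ (h : IsFan G c x y j) (hadj : G.Adj x (y (j + 1))) (hne : ∀ i ≤ j, y i ≠ y (j + 1))
    (hy : IsMissing (G.deleteEdges {s(x, y 0)}) c (y j) (c s(x, y (j + 1)))) :
    IsFan G c x y (j + 1) where
  adj i hi := (Nat.le_succ_iff.1 hi).elim (h.adj i) fun hi => hi ▸ hadj
  injOn := by
    rw [← Order.succ_eq_add_one, Order.Iic_succ, Set.injOn_insert (by simp)]
    exact ⟨h.injOn, fun ⟨i, hi, hij⟩ => hne i hi hij⟩
  isMissing i hi := (Nat.lt_succ_iff_lt_or_eq.1 hi).elim (h.isMissing i) fun hi => hi ▸ hy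

theorem ne_zero (h : IsFan G c x y j) (hi : i + 1 ≤ j) : y (i + 1) ≠ y 0 :=
  fun h0 => Nat.succ_ne_zero i (h.injOn hi (Nat.zero_le j) h0)

theorem adj_deleteEdges (h : IsFan G c x y j) (hi : i + 1 ≤ j) :
    (G.deleteEdges {s(x, y 0)}).Adj x (y (i + 1)) := by
  have := h.adj _ hi
  simp [this, this.ne', h.ne_zero hi]

theorem notMem (h : IsFan G c x y j) (hi : i + 1 ≤ j) : y (i + 1) ∉ s(x, y 0) := by
  simp [(h.adj _ hi).ne', h.ne_zero hi]

theorem rotate [DecidableEq V] (h : IsFan G c x y (j + 1)) :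
    IsFan G (Function.update c s(x, y 0) (c s(x, y 1))) x (fun i => y (i + 1)) j where
  adj i hi := h.adj _ (Nat.succ_le_succ hi)
  injOn i hi k hk hik :=
    Nat.succ_injective (h.injOn (Nat.succ_le_succ hi) (Nat.succ_le_succ hk) hik)
  isMissing i hi := by
    have hne : s(x, y (i + 1 + 1)) ≠ s(x, y 0) := by
      have := h.notMem (i := i + 1) (by omega)
      grind
    rw [Function.update_of_ne hne]
    exact (h.isMissing (i + 1) (by omega)).update_of_notMem (h.notMem (by omega))

theorem exists_isProperEdgeColoring (h : IsFan G c x y j)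
    (hc : IsProperEdgeColoring (G.deleteEdges {s(x, y 0)}) c)
    (hx : IsMissing (G.deleteEdges {s(x, y 0)}) c x a)
    (hy : IsMissing (G.deleteEdges {s(x, y 0)}) c (y j) a) :
    ∃ c' : Sym2 V → κ, IsProperEdgeColoring G c' := by
  classical
  induction j generalizing c y with
  | zero => exact ⟨_, hc.update hx hy⟩
  | succ j ih =>
    have hx1 : c s(x, y 1) ≠ a := hx (h.adj_deleteEdges (by omega))
    refine ih h.rotate
      (hc.rotate (h.adj 1 (by omega)) (h.ne_zero (by omega)) (h.isMissing 0 (by omega)))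
      (fun w hw => ?_) (hy.update_of_notMem (h.notMem le_rfl))
    rw [Function.update_apply]
    split_ifs with hw0
    · exact hx1
    · exact hx (by simpa [hw0] using SimpleGraph.deleteEdges_le _ hw)

end IsFan

section Kempe

variable {p q r : V}

theorem two_mul_card_le_sum_degree_add_two [Fintype V] [DecidableRel G.Adj] (hG : G.Connected) :
    2 * Fintype.card V ≤ ∑ v, G.degree v + 2 := by
  have hE := hG.card_vert_le_card_edgeSet_add_one
  rw [Nat.card_eq_fintype_card, Nat.card_eq_fintype_card, ← SimpleGraph.edgeFinset_card] at hE
  rw [G.sum_degrees_eq_twice_card_edges]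
  omega

-- The edge count bounds the total degree deficit `∑ v, (2 - G.degree v)` by `2`.
theorem card_le_two_of_degree_le_one [Fintype V] [DecidableRel G.Adj] (hG : G.Connected)
    (h2 : ∀ v, G.degree v ≤ 2) {T : Finset V} (h1 : ∀ v ∈ T, G.degree v ≤ 1) : #T ≤ 2 := by
  classical
  have hdeg : ∀ v, G.degree v + (if v ∈ T then 1 else 0) ≤ 2 := fun v => by
    split_ifs with hv
    · exact Nat.succ_le_succ (h1 v hv)
    · exact h2 v
  have hsum : ∑ v, G.degree v + #T ≤ Fintype.card V * 2 := by
    simpa [sum_add_distrib] using sum_le_card_nsmul univ _ 2 fun v _ => hdeg v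
  have := two_mul_card_le_sum_degree_add_two hG
  omega

theorem not_reachable_of_degree_le_one [Fintype V] [DecidableRel G.Adj]
    (h2 : ∀ v, G.degree v ≤ 2) (hp : G.degree p ≤ 1) (hq : G.degree q ≤ 1) (hr : G.degree r ≤ 1)
    (hpq : p ≠ q) (hpr : p ≠ r) (hqr : q ≠ r) (h : G.Reachable p q) : ¬ G.Reachable p r := by
  classical
  intro h'
  set C := G.connectedComponentMk p
  have hdeg : ∀ v : C.supp, (G.induce C.supp).degree v = G.degree v := fun v =>
    SimpleGraph.degree_induce_of_neighborSet_subset fun w hw =>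
      C.mem_supp_of_adj_mem_supp v.2 hw
  have hconn : (G.induce C.supp).Connected := C.connected_toSimpleGraph
  have hqC : q ∈ C.supp := SimpleGraph.ConnectedComponent.sound h.symm
  have hrC : r ∈ C.supp := SimpleGraph.ConnectedComponent.sound h'.symm
  set T : Finset C.supp := {⟨p, rfl⟩, ⟨q, hqC⟩, ⟨r, hrC⟩}
  have hcard : #T = 3 := card_eq_three.2 ⟨_, _, _, fun h => hpq (congrArg Subtype.val h),
    fun h => hpr (congrArg Subtype.val h), fun h => hqr (congrArg Subtype.val h), rfl⟩
  have := card_le_two_of_degree_le_one hconn (fun v => (hdeg v).trans_le (h2 v)) (T := T)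
    (by simp [T, hp, hq, hr, hdeg])
  omega

/-- The subgraph of the edges of `G` colored `a` or `b`; its components are Kempe chains. -/
def kempeGraph (G : SimpleGraph V) (c : Sym2 V → κ) (a b : κ) : SimpleGraph V :=
  G.deleteEdges {e | c e ≠ a ∧ c e ≠ b}

theorem kempeGraph_le : kempeGraph G c a b ≤ G :=
  SimpleGraph.deleteEdges_le _

theorem kempeGraph_adj {u : V} :
    (kempeGraph G c a b).Adj u v ↔ G.Adj u v ∧ (c s(u, v) = a ∨ c s(u, v) = b) := by
  rw [kempeGraph, SimpleGraph.deleteEdges_adj, Set.mem_ofPred_eq]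
  tauto

theorem IsProperEdgeColoring.degree_kempeGraph_le_two (hc : IsProperEdgeColoring G c)
    [Fintype ((kempeGraph G c a b).neighborSet v)] : (kempeGraph G c a b).degree v ≤ 2 := by
  classical
  refine ((hc.mono kempeGraph_le).degree_le_card (T := {a, b})
    fun w hw => ?_).trans card_le_two
  simpa using (kempeGraph_adj.1 hw).2

theorem IsProperEdgeColoring.degree_kempeGraph_le_one (hc : IsProperEdgeColoring G c)
    (hv : IsMissing G c v a ∨ IsMissing G c v b)
    [Fintype ((kempeGraph G c a b).neighborSet v)] : (kempeGraph G c a b).degree v ≤ 1 := by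
  have hc' : IsProperEdgeColoring (kempeGraph G c a b) c := hc.mono kempeGraph_le
  rcases hv with hv | hv
  · refine hc'.degree_le_card (T := {b}) fun w hw => ?_
    simpa using (kempeGraph_adj.1 hw).2.resolve_left (hv (kempeGraph_adj.1 hw).1)
  · refine hc'.degree_le_card (T := {a}) fun w hw => ?_
    simpa using (kempeGraph_adj.1 hw).2.resolve_right (hv (kempeGraph_adj.1 hw).1)

theorem IsProperEdgeColoring.not_reachable_kempeGraph [Finite V] (hc : IsProperEdgeColoring G c)
    (hp : IsMissing G c p a) (hq : IsMissing G c q b) (hr : IsMissing G c r b)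
    (hpq : p ≠ q) (hpr : p ≠ r) (hqr : q ≠ r) (h : (kempeGraph G c a b).Reachable p q) :
    ¬ (kempeGraph G c a b).Reachable p r := by
  classical
  have := Fintype.ofFinite V
  exact not_reachable_of_degree_le_one (fun v => hc.degree_kempeGraph_le_two)
    (hc.degree_kempeGraph_le_one (.inl hp)) (hc.degree_kempeGraph_le_one (.inr hq))
    (hc.degree_kempeGraph_le_one (.inr hr)) hpq hpr hqr h

open Classical in
/-- The Kempe change of `c`, exchanging the colors `a` and `b` on the component of `z` in
`kempeGraph G c a b`. -/
noncomputable def kempeSwap (G : SimpleGraph V) (c : Sym2 V → κ) (a b : κ) (z : V) : Sym2 V → κ :=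
  fun e => if ∃ v ∈ e, (kempeGraph G c a b).Reachable z v then Equiv.swap a b (c e) else c e

theorem kempeSwap_of_reachable [DecidableEq κ] {w : V} (hv : (kempeGraph G c a b).Reachable z v) :
    kempeSwap G c a b z s(v, w) = Equiv.swap a b (c s(v, w)) := by
  rw [kempeSwap, if_pos ⟨v, Sym2.mem_mk_left v w, hv⟩]
  congr!

theorem kempeSwap_of_not_reachable {w : V} (hv : ¬ (kempeGraph G c a b).Reachable z v)
    (hvw : G.Adj v w) : kempeSwap G c a b z s(v, w) = c s(v, w) := by
  classical
  by_cases hw : (kempeGraph G c a b).Reachable z w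
  · have hcol : ¬ (c s(v, w) = a ∨ c s(v, w) = b) := fun hab =>
      hv (hw.trans (kempeGraph_adj.2 ⟨hvw, hab⟩).symm.reachable)
    rw [Sym2.eq_swap, kempeSwap_of_reachable hw, Sym2.eq_swap]
    exact Equiv.swap_apply_of_ne_of_ne (fun h => hcol (.inl h)) fun h => hcol (.inr h)
  · exact if_neg (by simp [hv, hw])

theorem IsProperEdgeColoring.kempeSwap (hc : IsProperEdgeColoring G c) :
    IsProperEdgeColoring G (kempeSwap G c a b z) := by
  classical
  intro v p q hp hq h
  by_cases hv : (kempeGraph G c a b).Reachable z v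
  · rw [kempeSwap_of_reachable hv, kempeSwap_of_reachable hv] at h
    exact hc hp hq ((Equiv.swap a b).injective h)
  · rw [kempeSwap_of_not_reachable hv hp, kempeSwap_of_not_reachable hv hq] at h
    exact hc hp hq h

theorem IsMissing.kempeSwap_of_reachable [DecidableEq κ] {d : κ} (h : IsMissing G c v d)
    (hv : (kempeGraph G c a b).Reachable z v) :
    IsMissing G (kempeSwap G c a b z) v (Equiv.swap a b d) := fun w hw => by
  rw [LocalVizing.kempeSwap_of_reachable hv]
  exact (Equiv.swap a b).injective.ne (h hw)

theorem IsMissing.kempeSwap_of_not_reachable {d : κ} (h : IsMissing G c v d)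
    (hv : ¬ (kempeGraph G c a b).Reachable z v) :
    IsMissing G (kempeSwap G c a b z) v d := fun w hw => by
  rw [LocalVizing.kempeSwap_of_not_reachable hv hw]
  exact h hw

end Kempe

section Vizing

variable {y : ℕ → V} {m : V → κ} {j p : ℕ}

theorem IsFan.exists_isProperEdgeColoring_of_not_reachable (h : IsFan G c x y j)
    (hc : IsProperEdgeColoring (G.deleteEdges {s(x, y 0)}) c)
    (hx : IsMissing (G.deleteEdges {s(x, y 0)}) c x a)
    (hy : IsMissing (G.deleteEdges {s(x, y 0)}) c (y j) b)
    (hxy : ¬ (kempeGraph (G.deleteEdges {s(x, y 0)}) c a b).Reachable (y j) x)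
    (hb : ∀ i < j, (kempeGraph (G.deleteEdges {s(x, y 0)}) c a b).Reachable (y j) (y i) →
      c s(x, y (i + 1)) ≠ b) :
    ∃ c' : Sym2 V → κ, IsProperEdgeColoring G c' := by
  classical
  have hswap : ∀ i < j, kempeSwap (G.deleteEdges {s(x, y 0)}) c a b (y j) s(x, y (i + 1)) =
      c s(x, y (i + 1)) := fun i hi =>
    kempeSwap_of_not_reachable hxy (h.adj_deleteEdges hi)
  have hfan : IsFan G (kempeSwap (G.deleteEdges {s(x, y 0)}) c a b (y j)) x y j := by
    refine ⟨h.adj, h.injOn, fun i hi => ?_⟩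
    rw [hswap i hi]
    by_cases hr : (kempeGraph (G.deleteEdges {s(x, y 0)}) c a b).Reachable (y j) (y i)
    · have := (h.isMissing i hi).kempeSwap_of_reachable hr
      rwa [Equiv.swap_apply_of_ne_of_ne (hx (h.adj_deleteEdges hi)) (hb i hi hr)] at this
    · exact (h.isMissing i hi).kempeSwap_of_not_reachable hr
  refine hfan.exists_isProperEdgeColoring hc.kempeSwap (hx.kempeSwap_of_not_reachable hxy) ?_
  simpa using hy.kempeSwap_of_reachable (a := a) (b := b) (.refl (y j))

-- `x`, `y p` and `y j` have degree at most one in the Kempe graph, so the chain of `x` misses `y p`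
-- or `y j`; swap the colors on the chain of the missed vertex.
theorem IsFan.exists_isProperEdgeColoring_of_repeat [Finite V] (h : IsFan G c x y j)
    (hc : IsProperEdgeColoring (G.deleteEdges {s(x, y 0)}) c)
    (hx : IsMissing (G.deleteEdges {s(x, y 0)}) c x a)
    (hp : p < j) (hy : IsMissing (G.deleteEdges {s(x, y 0)}) c (y j) (c s(x, y (p + 1)))) :
    ∃ c' : Sym2 V → κ, IsProperEdgeColoring G c' := by
  have hb : ∀ i < j, c s(x, y (i + 1)) = c s(x, y (p + 1)) → i = p := fun i hi hip =>
    Nat.succ_injective <| h.injOn hi hp (hc (h.adj_deleteEdges hi) (h.adj_deleteEdges hp) hip)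
  set K := kempeGraph (G.deleteEdges {s(x, y 0)}) c a (c s(x, y (p + 1)))
  by_cases hxp : K.Reachable x (y p)
  · have hxj : ¬ K.Reachable x (y j) :=
      hc.not_reachable_kempeGraph hx (h.isMissing p hp) hy (h.adj p hp.le).ne (h.adj j le_rfl).ne
        (fun hpj => hp.ne (h.injOn hp.le (Set.self_mem_Iic) hpj)) hxp
    refine h.exists_isProperEdgeColoring_of_not_reachable hc hx hy (fun hr => hxj hr.symm)
      fun i hi hr hi' => ?_
    rw [hb i hi hi'] at hr
    exact hxj (hxp.trans hr.symm)
  · exact (h.mono hp.le).exists_isProperEdgeColoring_of_not_reachable hc hx (h.isMissing p hp)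
      (fun hr => hxp hr.symm) fun i hi _ hi' => hi.ne (hb i (hi.trans hp) hi')

theorem exists_isFan_isMissing_or_repeat [Finite V] {y₀ : V} (hy₀ : G.Adj x y₀)
    (hm : ∀ v, IsMissing (G.deleteEdges {s(x, y₀)}) c v (m v)) :
    ∃ (y : ℕ → V) (j : ℕ), y 0 = y₀ ∧ IsFan G c x y j ∧
      (IsMissing (G.deleteEdges {s(x, y₀)}) c x (m (y j)) ∨
        ∃ p < j, m (y j) = c s(x, y (p + 1))) := by
  classical
  have : Nonempty V := ⟨x⟩
  have hex : ∀ u, ¬ IsMissing (G.deleteEdges {s(x, y₀)}) c x (m u) →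
      ∃ w, (G.deleteEdges {s(x, y₀)}).Adj x w ∧ c s(x, w) = m u := fun u hu => by
    simpa only [IsMissing, not_forall, exists_prop, not_not] using hu
  choose! next hnext using hex
  let y : ℕ → V := fun i => next^[i] y₀
  have hbdd : ∃ j, ¬ IsFan G c x y j := by
    by_contra! hfan
    refine not_injective_infinite_finite y fun i k hik => ?_
    exact (hfan (max i k)).injOn (le_max_left i k) (le_max_right i k) hik
  have hzero : IsFan G c x y 0 :=
    ⟨fun i hi => by rwa [Nat.le_zero.1 hi],
      fun i hi k hk _ => (Nat.le_zero.1 hi).trans (Nat.le_zero.1 hk).symm,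
      fun i hi => absurd hi (Nat.not_lt_zero i)⟩
  obtain ⟨j, hj, hj'⟩ := Nat.exists_not_and_succ_of_not_zero_of_exists
    (p := fun j => ¬ IsFan G c x y j) (not_not.2 hzero) hbdd
  rw [not_not] at hj
  refine ⟨y, j, rfl, hj, or_iff_not_imp_left.2 fun hmiss => ?_⟩
  obtain ⟨hadj, hcol⟩ : (G.deleteEdges {s(x, y₀)}).Adj x (y (j + 1)) ∧
      c s(x, y (j + 1)) = m (y j) := by
    simpa only [y, Function.iterate_succ_apply'] using hnext _ hmiss
  obtain ⟨i, hi, hij⟩ : ∃ i ≤ j, y i = y (j + 1) := by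
    by_contra! hne
    exact hj' (hj.succ (SimpleGraph.deleteEdges_le _ hadj) hne (hcol ▸ hm (y j)))
  obtain _ | p := i
  · simp [← hij, y] at hadj
  · exact ⟨p, hi, by rw [hij, hcol]⟩

theorem exists_isProperEdgeColoring_of_deleteEdges [Finite V] {y₀ : V} (hy₀ : G.Adj x y₀)
    (hc : IsProperEdgeColoring (G.deleteEdges {s(x, y₀)}) c)
    (hm : ∀ v, ∃ a, IsMissing (G.deleteEdges {s(x, y₀)}) c v a) :
    ∃ c' : Sym2 V → κ, IsProperEdgeColoring G c' := by
  choose m hm using hm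
  obtain ⟨y, j, rfl, hfan, hmiss | ⟨p, hp, hmp⟩⟩ := exists_isFan_isMissing_or_repeat hy₀ hm
  · exact hfan.exists_isProperEdgeColoring hc hmiss (hm _)
  · exact hfan.exists_isProperEdgeColoring_of_repeat hc (hm x) hp (hmp ▸ hm (y j))

/-- **Vizing's theorem**. -/
theorem exists_isProperEdgeColoring [Fintype V] [Fintype κ] (G : SimpleGraph V)
    [hdec : DecidableRel G.Adj] (h : ∀ v, G.degree v < Fintype.card κ) :
    ∃ c : Sym2 V → κ, IsProperEdgeColoring G c := by
  induction G using WellFoundedLT.induction generalizing hdec with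
  | ind G ih =>
  classical
  by_cases hG : ∃ x y, G.Adj x y
  · obtain ⟨x, y, hxy⟩ := hG
    have hle : G.deleteEdges {s(x, y)} ≤ G := SimpleGraph.deleteEdges_le _
    have hlt : G.deleteEdges {s(x, y)} < G := hle.lt_of_ne fun heq => by
      rw [← heq] at hxy
      simp at hxy
    have hdeg : ∀ v, (G.deleteEdges {s(x, y)}).degree v < Fintype.card κ := fun v =>
      (SimpleGraph.degree_le_of_le hle).trans_lt (h v)
    obtain ⟨c, hc⟩ := ih _ hlt hdeg
    exact exists_isProperEdgeColoring_of_deleteEdges hxy hc fun v => exists_isMissing c (hdeg v)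
  · push Not at hG
    have hκ : V → Nonempty κ := fun v => Fintype.card_pos_iff.1 (Nat.zero_lt_of_lt (h v))
    exact ⟨fun e => (hκ e.out.1).some, fun v x y hx => absurd hx (hG v x)⟩

end Vizing

theorem degree_lt_degree [Fintype (G.neighborSet v)] [Fintype (H.neighborSet v)] (hGH : G ≤ H)
    (hH : H.Adj v x) (hG : ¬ G.Adj v x) : G.degree v < H.degree v := by
  refine card_lt_card ⟨fun w hw => ?_, fun hsub => hG ?_⟩
  · simpa using hGH (by simpa using hw)
  · simpa using hsub (by simpa using hH : x ∈ H.neighborFinset v)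

theorem degree_sup_le [Fintype (G.neighborSet v)] [Fintype (H.neighborSet v)]
    [Fintype ((G ⊔ H).neighborSet v)] : (G ⊔ H).degree v ≤ G.degree v + H.degree v := by
  classical
  rw [SimpleGraph.degree, SimpleGraph.neighborFinset_sup]
  exact card_union_le _ _

/-- The subgraph of the edges of `G` that are colored `a` and touch the vertex set `T`. -/
def colorClassAt (G : SimpleGraph V) (c : Sym2 V → κ) (a : κ) (T : Set V) : SimpleGraph V where
  Adj u v := G.Adj u v ∧ c s(u, v) = a ∧ (u ∈ T ∨ v ∈ T)
  symm := ⟨fun _ _ h => ⟨h.1.symm, Sym2.eq_swap ▸ h.2.1, h.2.2.symm⟩⟩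
  loopless := ⟨fun _ h => h.1.ne rfl⟩

noncomputable instance (G : SimpleGraph V) (c : Sym2 V → κ) (a : κ) (T : Set V) :
    DecidableRel (colorClassAt G c a T).Adj :=
  Classical.decRel _

section colorClassAt

variable {T : Set V} {m : V → κ}

theorem colorClassAt_le : colorClassAt G c a T ≤ G :=
  fun _ _ h => h.1

theorem IsProperEdgeColoring.degree_colorClassAt_le_one (hc : IsProperEdgeColoring G c)
    [Fintype ((colorClassAt G c a T).neighborSet v)] : (colorClassAt G c a T).degree v ≤ 1 :=
  (hc.mono colorClassAt_le).degree_le_card (T := {a}) fun _ hw => mem_singleton.2 hw.2.1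

theorem IsProperEdgeColoring.colorClassAt_const {κ' : Type*} (hc : IsProperEdgeColoring G c)
    (d : κ') : IsProperEdgeColoring (colorClassAt G c a T) fun _ => d :=
  fun _ _ _ hx hy _ => hc hx.1 hy.1 (hx.2.1.trans hy.2.1.symm)

theorem exists_colorClassAt_adj (hv : v ∈ T) (ha : ¬ IsMissing G c v a) :
    ∃ w, (colorClassAt G c a T).Adj v w := by
  simp only [IsMissing, not_forall, not_not] at ha
  obtain ⟨w, hw, hwa⟩ := ha
  exact ⟨w, hw, hwa, .inl hv⟩

theorem IsProperEdgeColoring.eq_of_isMissing [Fintype κ] [Fintype (G.neighborSet v)]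
    (hc : IsProperEdgeColoring G c) (hv : Fintype.card κ ≤ G.degree v + 1)
    (ha : IsMissing G c v a) (hb : IsMissing G c v b) : a = b := by
  classical
  by_contra hab
  have hdeg : G.degree v ≤ #({a, b}ᶜ : Finset κ) :=
    hc.degree_le_card fun w hw => by simp [ha hw, hb hw]
  have hle := card_le_univ ({a, b} : Finset κ)
  rw [card_compl] at hdeg
  rw [card_pair hab] at hdeg hle
  omega

theorem IsProperEdgeColoring.degree_sdiff_lt [Fintype V] [DecidableRel G.Adj] [Fintype κ]
    (hc : IsProperEdgeColoring G c) (hm : IsMissing G c v (m v)) (hab : a ≠ b) (hv : v ∈ T)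
    (hdeg : Fintype.card κ ≤ G.degree v + 1) :
    (G \ (colorClassAt G c a T ⊔ colorClassAt G c b {u ∈ T | m u = a})).degree v <
      G.degree v := by
  obtain ⟨w, hw⟩ :
      ∃ w, (colorClassAt G c a T ⊔ colorClassAt G c b {u ∈ T | m u = a}).Adj v w := by
    by_cases ha : IsMissing G c v a
    · have hma : m v = a := hc.eq_of_isMissing hdeg hm ha
      have hb : ¬ IsMissing G c v b := fun hb => hab (hc.eq_of_isMissing hdeg ha hb)
      exact (exists_colorClassAt_adj (T := {u ∈ T | m u = a}) ⟨hv, hma⟩ hb).imp fun _ => .inr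
    · exact (exists_colorClassAt_adj hv ha).imp fun _ => .inl
  exact degree_lt_degree sdiff_le (sup_le colorClassAt_le colorClassAt_le hw) fun h => h.2 hw

theorem IsProperEdgeColoring.degree_sdiff_le [Fintype V] [DecidableRel G.Adj] [Fintype κ] {t : ℕ}
    (hc : IsProperEdgeColoring G c) (hm : IsMissing G c v (m v)) (hab : a ≠ b)
    (hκ : Fintype.card κ ≤ t + 2) (hT : {u | G.degree u = t + 1} ⊆ T) (hv : G.degree v ≤ t + 1) :
    (G \ (colorClassAt G c a T ⊔ colorClassAt G c b {u ∈ T | m u = a})).degree v ≤ t := by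
  rcases hv.eq_or_lt with hv | hv
  · have hκ' : Fintype.card κ ≤ G.degree v + 1 := hκ.trans_eq (congrArg (· + 1) hv.symm)
    exact Nat.le_of_lt_succ ((hc.degree_sdiff_lt hm hab (hT hv) hκ').trans_eq hv)
  · exact (SimpleGraph.degree_le_of_le sdiff_le).trans (Nat.le_of_lt_succ hv)

theorem sum_degree_colorClassAt_le [Fintype V] [Fintype κ] (G : SimpleGraph V)
    [DecidableRel G.Adj] (c : Sym2 V → κ) (m : V → κ) (T : Set V) (v : V) :
    ∑ ab : κ × κ, (colorClassAt G c ab.2 {u ∈ T | m u = ab.1}).degree v ≤ 2 * G.degree v := by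
  classical
  have hpairs : ∀ w, #{ab : κ × κ | (colorClassAt G c ab.2 {u ∈ T | m u = ab.1}).Adj v w} ≤ 2 :=
    fun w => by
      refine (card_le_card (t := {(m v, c s(v, w)), (m w, c s(v, w))}) ?_).trans card_le_two
      rintro ⟨a, b⟩ hab
      obtain ⟨-, rfl, ⟨-, rfl⟩ | ⟨-, rfl⟩⟩ := (mem_filter.1 hab).2 <;> simp
  calc ∑ ab : κ × κ, (colorClassAt G c ab.2 {u ∈ T | m u = ab.1}).degree v
      = ∑ ab : κ × κ, #{w ∈ G.neighborFinset v |
          (colorClassAt G c ab.2 {u ∈ T | m u = ab.1}).Adj v w} :=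
        sum_congr rfl fun ab _ => congrArg card <| by
          ext w
          simpa using fun h => colorClassAt_le h
    _ = ∑ w ∈ G.neighborFinset v,
          #{ab : κ × κ | (colorClassAt G c ab.2 {u ∈ T | m u = ab.1}).Adj v w} :=
        sum_card_bipartiteAbove_eq_sum_card_bipartiteBelow _
    _ ≤ 2 * G.degree v := by
        rw [mul_comm]
        exact sum_le_card_nsmul _ _ _ fun w _ => hpairs w

theorem card_offDiag_univ [Fintype κ] {k : ℕ} (hk : Fintype.card κ = k + 1) :
    #(univ.offDiag : Finset (κ × κ)) = k * (k + 1) := by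
  classical
  rw [offDiag_card, card_univ, hk, ← Nat.sub_one_mul, Nat.add_sub_cancel]

theorem IsProperEdgeColoring.sum_offDiag_two_pow_degree_colorClassAt_le [Fintype V] [Fintype κ]
    [DecidableRel G.Adj] {k : ℕ} (hc : IsProperEdgeColoring G c)
    (hk : Fintype.card κ = k + 1) (hv : G.degree v ≤ k) :
    ∑ ab ∈ univ.offDiag, 2 ^ (colorClassAt G c ab.2 {u ∈ T | m u = ab.1}).degree v ≤
      k * (k + 3) := by
  set D : κ × κ → SimpleGraph V := fun ab => colorClassAt G c ab.2 {u ∈ T | m u = ab.1}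
  have hpow : ∀ ab, 2 ^ (D ab).degree v = 1 + (D ab).degree v := fun ab => by
    obtain h | h : (D ab).degree v = 0 ∨ (D ab).degree v = 1 :=
      Nat.le_one_iff_eq_zero_or_eq_one.1 hc.degree_colorClassAt_le_one
    all_goals simp [h]
  calc ∑ ab ∈ univ.offDiag, 2 ^ (D ab).degree v
      = k * (k + 1) + ∑ ab ∈ univ.offDiag, (D ab).degree v := by
        simp only [hpow, sum_add_distrib, sum_const, card_offDiag_univ hk, smul_eq_mul, mul_one]
    _ ≤ k * (k + 1) + 2 * G.degree v := by
        gcongr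
        exact (sum_le_univ_sum_of_nonneg fun _ => Nat.zero_le _).trans
          (sum_degree_colorClassAt_le G c m T v)
    _ ≤ k * (k + 3) := by lia

theorem IsProperEdgeColoring.exists_ne_sum_mul_two_pow_degree_le [Fintype V] [Fintype κ]
    [Nontrivial κ] [DecidableRel G.Adj] (hc : IsProperEdgeColoring G c)
    (hdeg : ∀ v, G.degree v < Fintype.card κ) (m : V → κ) (T : Set V) (w : V → ℕ) :
    ∃ a b, a ≠ b ∧
      Fintype.card κ * ∑ v, w v * 2 ^ (colorClassAt G c b {u ∈ T | m u = a}).degree v ≤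
        (Fintype.card κ + 2) * ∑ v, w v := by
  classical
  set D : κ × κ → SimpleGraph V := fun ab => colorClassAt G c ab.2 {u ∈ T | m u = ab.1}
  obtain ⟨k, hk⟩ : ∃ k, Fintype.card κ = k + 1 := Nat.exists_eq_add_one.2 Fintype.card_pos
  have hpairs : (univ.offDiag : Finset (κ × κ)).Nonempty :=
    (exists_pair_ne κ).elim fun a ⟨b, hab⟩ => ⟨(a, b), by simpa using hab⟩
  obtain ⟨⟨a, b⟩, hab, h⟩ : ∃ ab ∈ (univ.offDiag : Finset (κ × κ)),
      (k + 1) * ∑ v, w v * 2 ^ (D ab).degree v ≤ (k + 3) * ∑ v, w v := by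
    refine exists_le_of_sum_le hpairs ?_
    calc ∑ ab ∈ univ.offDiag, (k + 1) * ∑ v, w v * 2 ^ (D ab).degree v
        = (k + 1) * ∑ v, w v * ∑ ab ∈ univ.offDiag, 2 ^ (D ab).degree v := by
          rw [← mul_sum, sum_comm]
          simp only [mul_sum]
      _ ≤ (k + 1) * ∑ v, w v * (k * (k + 3)) := by
          gcongr with v
          exact hc.sum_offDiag_two_pow_degree_colorClassAt_le hk
            (Nat.le_of_lt_succ ((hdeg v).trans_eq hk))
      _ = ∑ ab ∈ (univ.offDiag : Finset (κ × κ)), (k + 3) * ∑ v, w v := by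
          rw [sum_const, card_offDiag_univ hk, ← sum_mul, smul_eq_mul]
          ring
  exact ⟨a, b, by simpa using hab, by rwa [hk]⟩

end colorClassAt

theorem IsProperEdgeColoring.piecewise [DecidablePred (· ∈ H.edgeSet)] {d : Sym2 V → κ}
    (hH : IsProperEdgeColoring H d)
    (hG : IsProperEdgeColoring (G \ H) c)
    (hne : ∀ v x y, H.Adj v x → (G \ H).Adj v y → d s(v, x) ≠ c s(v, y)) :
    IsProperEdgeColoring G (H.edgeSet.piecewise d c) := by
  intro v x y hx hy hxy
  simp only [Set.piecewise, SimpleGraph.mem_edgeSet] at hxy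
  split_ifs at hxy with hHx hHy hHy
  · exact hH hHx hHy hxy
  · exact absurd hxy (hne v x y hHx ⟨hy, hHy⟩)
  · exact absurd hxy.symm (hne v y x hHy ⟨hx, hHx⟩)
  · exact hG ⟨hx, hHx⟩ ⟨hy, hHy⟩ hxy

section LocalColoring

variable [Fintype V] [DecidableRel G.Adj] {F D M : SimpleGraph V}
  [DecidableRel D.Adj] [DecidableRel M.Adj] {c : Sym2 V → ℕ} {t : ℕ}

/-- The coloring `c` is proper on the edges of `G` outside the deferred graph `F`, and each of these
edges has a color bounded by the larger degree in `G` of its ends. -/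
structure IsLocalColoring (G : SimpleGraph V) [G.LocallyFinite] (F : SimpleGraph V)
    (c : Sym2 V → ℕ) : Prop where
  isProperEdgeColoring : IsProperEdgeColoring (G \ F) c
  le_max_degree : ∀ ⦃u v⦄, (G \ F).Adj u v → c s(u, v) ≤ max (G.degree u) (G.degree v)

theorem IsLocalColoring.sup (h : IsLocalColoring (G \ (M ⊔ D)) F c)
    (hdeg : ∀ v, (G \ (M ⊔ D)).degree v ≤ t)
    (hM : IsProperEdgeColoring M fun _ => t + 1)
    (hMdeg : ∀ ⦃u v⦄, M.Adj u v → t + 1 ≤ max (G.degree u) (G.degree v)) :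
    IsLocalColoring G (D ⊔ F) (M.edgeSet.piecewise (fun _ => t + 1) c) := by
  have hle : (G \ (D ⊔ F)) \ M ≤ (G \ (M ⊔ D)) \ F := by
    simp only [sdiff_sdiff_left, sup_comm, sup_left_comm, le_refl]
  refine ⟨hM.piecewise (h.isProperEdgeColoring.mono hle) fun v x y _ hy heq => ?_,
    fun u v huv => ?_⟩
  · have := (h.le_max_degree (hle hy)).trans (max_le (hdeg v) (hdeg y))
    omega
  · simp only [Set.piecewise, SimpleGraph.mem_edgeSet]
    split_ifs with hMuv
    · exact hMdeg hMuv
    · exact (h.le_max_degree (hle ⟨huv, hMuv⟩)).trans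
        (max_le_max (SimpleGraph.degree_le_of_le sdiff_le) (SimpleGraph.degree_le_of_le sdiff_le))

-- The constant is the telescoping product of the factors `(s + 4) / (s + 2)` over `s < t`.
theorem exists_isLocalColoring (G : SimpleGraph V) [DecidableRel G.Adj]
    (hdeg : ∀ v, G.degree v ≤ t) (w : V → ℕ) :
    ∃ (F : SimpleGraph V) (_ : DecidableRel F.Adj) (c : Sym2 V → ℕ),
      IsLocalColoring G F c ∧
        6 * ∑ v, w v * 2 ^ F.degree v ≤ (t + 2) * (t + 3) * ∑ v, w v := by
  induction t generalizing G w with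
  | zero =>
    have hG : ∀ u v, ¬ G.Adj u v := fun u v huv => huv.degree_pos_left.not_ge (hdeg u)
    have hlocal : IsLocalColoring G ⊥ 0 :=
      ⟨fun v x _ h => absurd h.1 (hG v x), fun u v h => absurd h.1 (hG u v)⟩
    exact ⟨⊥, inferInstance, 0, hlocal, by simp⟩
  | succ t ih =>
    have hlt : ∀ v, G.degree v < Fintype.card (Fin (t + 2)) := fun v => by
      rw [Fintype.card_fin]
      exact Nat.lt_succ_of_le (hdeg v)
    obtain ⟨d, hd⟩ := exists_isProperEdgeColoring G hlt
    choose m hm using fun v => exists_isMissing d (hlt v)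
    set T : Set V := {v | G.degree v = t + 1}
    obtain ⟨a, b, hab, hw⟩ := hd.exists_ne_sum_mul_two_pow_degree_le hlt m T w
    set M := colorClassAt G d a T
    set D := colorClassAt G d b {u ∈ T | m u = a}
    have hdeg' : ∀ v, (G \ (M ⊔ D)).degree v ≤ t := fun v =>
      hd.degree_sdiff_le (hm v) hab (Fintype.card_fin _).le subset_rfl (hdeg v)
    obtain ⟨F, _, c, hc, hF⟩ := ih (G \ (M ⊔ D)) hdeg' fun v => w v * 2 ^ D.degree v
    refine ⟨D ⊔ F, inferInstance, _, hc.sup hdeg' (hd.colorClassAt_const _) fun u v huv => ?_, ?_⟩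
    · rcases huv.2.2 with hu | hv
      · exact hu.ge.trans (le_max_left _ _)
      · exact hv.ge.trans (le_max_right _ _)
    · calc 6 * ∑ v, w v * 2 ^ (D ⊔ F).degree v
          ≤ 6 * ∑ v, w v * 2 ^ D.degree v * 2 ^ F.degree v := by
            simp_rw [mul_assoc, ← pow_add]
            gcongr
            · norm_num
            · exact degree_sup_le
        _ ≤ (t + 2) * (t + 3) * ∑ v, w v * 2 ^ D.degree v := hF
        _ = (t + 3) * (Fintype.card (Fin (t + 2)) * ∑ v, w v * 2 ^ D.degree v) := by
            rw [Fintype.card_fin]; ring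
        _ ≤ (t + 3) * ((Fintype.card (Fin (t + 2)) + 2) * ∑ v, w v) := by gcongr
        _ = (t + 1 + 2) * (t + 1 + 3) * ∑ v, w v := by rw [Fintype.card_fin]; ring

theorem IsLocalColoring.exists_isProperEdgeColoring [DecidableRel F.Adj]
    (h : IsLocalColoring G F c) :
    ∃ φ : Sym2 V → ℕ, IsProperEdgeColoring G φ ∧
      ∀ ⦃u v⦄, G.Adj u v → φ s(u, v) ≤ max (G.degree u) (G.degree v) + (F.maxDegree + 1) := by
  obtain ⟨d, hd⟩ := LocalVizing.exists_isProperEdgeColoring (κ := Fin (F.maxDegree + 1)) F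
    fun v => by simpa using Nat.lt_succ_of_le (F.degree_le_maxDegree v)
  have hF : IsProperEdgeColoring F fun e => (d e : ℕ) := fun v x y hx hy hxy =>
    hd hx hy (Fin.ext hxy)
  have hG : IsProperEdgeColoring (G \ F) fun e => c e + (F.maxDegree + 1) := fun v x y hx hy hxy =>
    h.isProperEdgeColoring hx hy (Nat.add_right_cancel hxy)
  refine ⟨_, hF.piecewise hG fun v x y _ _ => ((d _).isLt.trans_le (Nat.le_add_left _ _)).ne,
    fun u v huv => ?_⟩
  simp only [Set.piecewise, SimpleGraph.mem_edgeSet]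
  split_ifs with hFuv
  · exact (d _).isLt.le.trans (Nat.le_add_left _ _)
  · exact Nat.add_le_add_right (h.le_max_degree ⟨huv, hFuv⟩) _

theorem exists_isLocalColoring_two_pow_maxDegree_le [Nonempty V] (G : SimpleGraph V)
    [DecidableRel G.Adj] :
    ∃ (F : SimpleGraph V) (_ : DecidableRel F.Adj) (c : Sym2 V → ℕ),
      IsLocalColoring G F c ∧ 2 ^ F.maxDegree ≤ Fintype.card V ^ 3 := by
  obtain ⟨t, ht⟩ := Nat.exists_eq_add_one.2 (Fintype.card_pos (α := V))
  obtain ⟨F, _, c, hc, hF⟩ := exists_isLocalColoring G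
    (fun v => Nat.le_of_lt_succ ((G.degree_lt_card_verts v).trans_eq ht)) 1
  obtain ⟨v, hv⟩ := F.exists_maximal_degree_vertex
  refine ⟨F, inferInstance, c, hc, ?_⟩
  have hsum : 2 ^ F.degree v ≤ ∑ v, 2 ^ F.degree v :=
    single_le_sum (f := fun v => 2 ^ F.degree v) (fun _ _ => Nat.zero_le _) (mem_univ v)
  simp only [Pi.one_apply, one_mul, sum_const, card_univ, smul_eq_mul, mul_one, ht] at hF
  have ht' : (t + 2) * (t + 3) ≤ 6 * (t + 1) ^ 2 := by nlinarith
  have := Nat.mul_le_mul_right (t + 1) ht'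
  rw [hv, ht]
  lia

theorem exists_isProperEdgeColoring_le_max_degree_add_log (G : SimpleGraph V)
    [DecidableRel G.Adj] :
    ∃ φ : Sym2 V → ℕ, IsProperEdgeColoring G φ ∧ ∀ ⦃u v⦄, G.Adj u v →
      φ s(u, v) ≤ max (G.degree u) (G.degree v) + Nat.log 2 (Fintype.card V ^ 4) := by
  cases isEmpty_or_nonempty V with
  | inl _ => exact ⟨isEmptyElim, isEmptyElim, isEmptyElim⟩
  | inr _ =>
    obtain ⟨F, _, c, hc, hF⟩ := exists_isLocalColoring_two_pow_maxDegree_le G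
    obtain ⟨φ, hφ, hle⟩ := hc.exists_isProperEdgeColoring
    refine ⟨φ, hφ, fun u v huv => (hle huv).trans (Nat.add_le_add_left ?_ _)⟩
    have hn : 2 ≤ Fintype.card V := Fintype.one_lt_card_iff.2 ⟨u, v, huv.ne⟩
    refine Nat.le_log_of_pow_le one_lt_two ?_
    rw [pow_succ, pow_succ]
    gcongr

end LocalColoring

end LocalVizing

/-- **Local near-Vizing coloring.** There is an absolute constant `C > 0` such
that every finite simple graph on `n ≥ 2` vertices has a proper edge coloring
`φ : E → ℕ` in which every edge `(u, v)` receives a color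
`φ(u,v) ≤ max(deg u, deg v) + C·log n`. -/
theorem local_near_vizing_coloring :
    ∃ C : ℝ, 0 < C ∧
      ∀ (V : Type) [Fintype V] [DecidableEq V]
        (G : SimpleGraph V) [DecidableRel G.Adj],
        2 ≤ Fintype.card V →
        ∃ φ : G.edgeSet → ℕ,
          (∀ e f : G.edgeSet, e ≠ f →
            (∃ v : V, v ∈ (e : Sym2 V) ∧ v ∈ (f : Sym2 V)) → φ e ≠ φ f) ∧
          ∀ (u v : V) (h : G.Adj u v),
            (φ ⟨s(u, v), G.mem_edgeSet.mpr h⟩ : ℝ) ≤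
              max (G.degree u) (G.degree v) + C * Real.log (Fintype.card V) := by
  refine ⟨4 / Real.log 2, by positivity, fun V _ _ G _ _ => ?_⟩
  obtain ⟨φ, hφ, hle⟩ := LocalVizing.exists_isProperEdgeColoring_le_max_degree_add_log G
  refine ⟨fun e => φ e, ?_, fun u v h => ?_⟩
  · rintro ⟨e, he⟩ ⟨f, hf⟩ hef ⟨v, hve, hvf⟩ heq
    obtain ⟨x, rfl⟩ := Sym2.mem_iff_exists.1 hve
    obtain ⟨y, rfl⟩ := Sym2.mem_iff_exists.1 hvf
    have hxy : x = y := hφ he hf heq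
    subst hxy
    exact hef rfl
  · have hlog := Real.natLog_le_logb (Fintype.card V ^ 4) 2
    have hle : (φ s(u, v) : ℝ) ≤
        max (G.degree u) (G.degree v) + Nat.log 2 (Fintype.card V ^ 4) := by
      exact_mod_cast hle h
    refine hle.trans (add_le_add_right (hlog.trans_eq ?_) _)
    rw [Nat.cast_pow, Nat.cast_ofNat, Real.logb, Real.log_pow]
    ring
end
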